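/- Let |p|<1 and let a_1,…,a_n, z_1,…,z_n ∈ ℂ* be such that all the theta values below are nonzero where required. Then det_{1≤i,j≤n} ( 1 / (a_i^{-1} θ(a_i z_j;p) θ(a_i/z_j;p)) ) = (−1)^{n(n−1)/2} · [∏_{1≤i<j≤n} a_i^{-1} θ(a_i a_j;p)θ(a_i/a_j;p) · ∏_{1≤i<j≤n} z_i^{-1} θ(z_i z_j;p)θ(z_i/z_j;p)] / [∏_{1≤i,j≤n} a_i^{-1} θ(a_i z_j;p)θ(a_i/z_j;p)] (elliptic Cauchy determinant). -/

import Mathlib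

/-!
By the Jacobi triple product, `θ(x; p)` is a constant multiple of `∑ (-1)^k p^(k(k-1)/2) x^k`.
Multiplying the series of `θ(az; p)` and `θ(a/z; p)` and splitting the double sum by the parity of
the sum of the two indices gives `a⁻¹ θ(az; p) θ(a/z; p) = f(a) g(z) - g(a) f(z)` for two functions
`f`, `g` of one variable. The determinant is therefore the classical Cauchy determinant in the
homogeneous coordinates `(f(aᵢ) : g(aᵢ))` and `(f(zⱼ) : g(zⱼ))`.
-/

noncomputable def qPochhammerInf (z q : ℂ) : ℂ := ∏' j : ℕ, (1 - z * q ^ j)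

noncomputable def theta (z p : ℂ) : ℂ :=
  ∏' j : ℕ, (1 - z * p ^ j) * (1 - p ^ (j + 1) * z⁻¹)

noncomputable def ellGamma (z p q : ℂ) : ℂ :=
  ∏' jk : ℕ × ℕ,
    (1 - z⁻¹ * p ^ (jk.1 + 1) * q ^ (jk.2 + 1)) / (1 - z * p ^ jk.1 * q ^ jk.2)

open Filter
open scoped Topology

section CauchyDeterminant

variable {K : Type*} [Field K] {n : ℕ}

theorem det_eq_mul_det_schurComplement (A : Matrix (Fin (n + 1)) (Fin (n + 1)) K)
    (hA : A 0 0 ≠ 0) :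
    A.det = A 0 0 *
      (Matrix.of fun i j : Fin n => A i.succ j.succ - A i.succ 0 / A 0 0 * A 0 j.succ).det := by
  let B : Matrix (Fin (n + 1)) (Fin (n + 1)) K :=
    Matrix.of (Fin.cons (A 0) fun i j => A i.succ j - A i.succ 0 / A 0 0 * A 0 j)
  have hB (i : Fin n) : B i.succ 0 = 0 := by simp [B, hA]
  have hdet : A.det = B.det := by
    refine Matrix.det_eq_of_forall_row_eq_smul_add_const
      (Fin.cons 0 fun i => A i.succ 0 / A 0 0) 0 rfl fun i j => ?_
    cases i using Fin.cases <;> simp [B]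
  rw [hdet, Matrix.det_succ_column_zero, Fin.sum_univ_succ,
    Finset.sum_eq_zero fun i _ => by rw [hB]; ring]
  simp only [Fin.val_zero, pow_zero, one_mul, add_zero]
  rfl

/-- The determinant of the `2 × 2` matrix with rows `u` and `v`. In terms of the points
`u.1 / u.2` and `v.1 / v.2` it is the homogeneous form of their difference, which is how it replaces
the entries `x - y` of a Cauchy matrix. -/
def bracket {R : Type*} [CommRing R] (u v : R × R) : R := u.1 * v.2 - u.2 * v.1

theorem bracket_mul_bracket_sub {R : Type*} [CommRing R] (u₀ u v₀ v : R × R) :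
    bracket u₀ v₀ * bracket u v - bracket u₀ v * bracket u v₀ = bracket u₀ u * bracket v₀ v := by
  simp only [bracket]
  ring

theorem det_inv_bracket (u v : Fin n → K × K) (h : ∀ i j, bracket (u i) (v j) ≠ 0) :
    (Matrix.of fun i j => (bracket (u i) (v j))⁻¹).det =
      (-1) ^ (n * (n - 1) / 2) *
        ((∏ i, ∏ j ∈ Finset.Ioi i, bracket (u i) (u j)) *
          (∏ i, ∏ j ∈ Finset.Ioi i, bracket (v i) (v j))) /
        ∏ i, ∏ j, bracket (u i) (v j) := by
  induction n with
  | zero => simp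
  | succ n ih =>
    let row (j : Fin n) : K := bracket (v 0) (v j.succ) / bracket (u 0) (v j.succ)
    let col (i : Fin n) : K := -(bracket (u 0) (u i.succ) / bracket (u i.succ) (v 0))
    let C : Matrix (Fin n) (Fin n) K := Matrix.of fun i j => (bracket (u i.succ) (v j.succ))⁻¹
    have hschur (i j : Fin n) : (bracket (u i.succ) (v j.succ))⁻¹ - (bracket (u i.succ) (v 0))⁻¹ /
        (bracket (u 0) (v 0))⁻¹ * (bracket (u 0) (v j.succ))⁻¹ = col i * (row j * C i j) := by
      have h0j := h 0 j.succ
      have hi0 := h i.succ 0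
      have hij := h i.succ j.succ
      simp only [row, col, C, Matrix.of_apply]
      field_simp
      linear_combination -bracket_mul_bracket_sub (u 0) (u i.succ) (v 0) (v j.succ)
    have hrow : (Matrix.of fun i j => row j * C i j).det = (∏ j, row j) * C.det :=
      Matrix.det_mul_row row C
    have hcol : (Matrix.of fun i j => col i * (row j * C i j)).det =
        (∏ i, col i) * (Matrix.of fun i j => row j * C i j).det :=
      Matrix.det_mul_column col _
    rw [det_eq_mul_det_schurComplement _ (inv_ne_zero (h 0 0))]
    simp only [Matrix.of_apply, hschur]
    rw [hcol, hrow, ih (fun i => u i.succ) (fun j => v j.succ) fun i j => h _ _,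
      Nat.triangle_succ, pow_add]
    simp only [row, col, Fin.prod_univ_succ, Fin.prod_Ioi_zero, Fin.prod_Ioi_succ,
      Finset.prod_mul_distrib, Finset.prod_div_distrib, Finset.prod_neg, Finset.card_univ,
      Fintype.card_fin]
    ring

end CauchyDeterminant

section QPochhammer

/-- The finite `q`-Pochhammer symbol `(z; q)ₙ`. -/
def qPochhammer {R : Type*} [CommRing R] (z q : R) (n : ℕ) : R :=
  ∏ j ∈ Finset.range n, (1 - z * q ^ j)

theorem qPochhammer_succ {R : Type*} [CommRing R] (z q : R) (n : ℕ) :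
    qPochhammer z q (n + 1) = qPochhammer z q n * (1 - z * q ^ n) :=
  Finset.prod_range_succ _ n

variable {K : Type*} [Field K] {q : K}

/-- The reciprocal of `(q; q)ₖ`, extended by zero to negative `k`; this extension is the one
that is compatible with the recursion `qPochhammerSelfInv_sub_one`. -/
noncomputable def qPochhammerSelfInv (q : K) : ℤ → K
  | .ofNat k => (qPochhammer q q k)⁻¹
  | .negSucc _ => 0

/-- The `q`-binomial coefficient `[2n choose n + k]`, which vanishes for `n < |k|`. -/
noncomputable def centralQBinom (q : K) (n : ℕ) (k : ℤ) : K :=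
  qPochhammer q q (2 * n) * (qPochhammerSelfInv q (n + k) * qPochhammerSelfInv q (n - k))

theorem qPochhammerSelfInv_natCast (q : K) (k : ℕ) :
    qPochhammerSelfInv q k = (qPochhammer q q k)⁻¹ := rfl

theorem qPochhammerSelfInv_of_neg (q : K) {k : ℤ} (hk : k < 0) : qPochhammerSelfInv q k = 0 := by
  obtain ⟨m, rfl⟩ := Int.eq_negSucc_of_lt_zero hk
  rfl

theorem one_sub_mul_pow_ne_zero (hq : ¬IsOfFinOrder q) (j : ℕ) : 1 - q * q ^ j ≠ 0 := fun h =>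
  hq <| isOfFinOrder_iff_pow_eq_one.2
    ⟨j + 1, j.succ_pos, by rw [pow_succ', ← sub_eq_zero.1 h]⟩

theorem qPochhammerSelfInv_sub_one (hq : ¬IsOfFinOrder q) (k : ℤ) :
    qPochhammerSelfInv q (k - 1) = (1 - q ^ k) * qPochhammerSelfInv q k := by
  rcases lt_trichotomy k 0 with hk | rfl | hk
  · rw [qPochhammerSelfInv_of_neg q hk, qPochhammerSelfInv_of_neg q (by lia), mul_zero]
  · rw [qPochhammerSelfInv_of_neg q (by lia), zpow_zero, sub_self, zero_mul]
  · obtain ⟨m, rfl⟩ : ∃ m : ℕ, k = (m + 1 : ℕ) := ⟨k.toNat - 1, by lia⟩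
    have := one_sub_mul_pow_ne_zero hq m
    rw [Nat.cast_succ, add_sub_cancel_right, ← Nat.cast_succ, qPochhammerSelfInv_natCast,
      qPochhammerSelfInv_natCast, qPochhammer_succ, zpow_natCast, pow_succ', mul_inv]
    field_simp

theorem centralQBinom_zero_zero (q : K) : centralQBinom q 0 0 = 1 := by
  simp [centralQBinom, qPochhammer, qPochhammerSelfInv]

theorem centralQBinom_zero_of_ne (q : K) {k : ℤ} (hk : k ≠ 0) : centralQBinom q 0 k = 0 := by
  rcases hk.lt_or_gt with hk | hk <;> simp [centralQBinom, qPochhammerSelfInv_of_neg, hk]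

theorem centralQBinom_succ (hq0 : q ≠ 0) (hq : ¬IsOfFinOrder q) (n : ℕ) (k : ℤ) :
    centralQBinom q (n + 1) k =
      (1 + q ^ (2 * n + 1)) * centralQBinom q n k +
        q ^ (n + 1 - k) * centralQBinom q n (k - 1) +
        q ^ (n + 1 + k) * centralQBinom q n (k + 1) := by
  have hplus := qPochhammerSelfInv_sub_one hq (n + 1 + k)
  have hplus' := qPochhammerSelfInv_sub_one hq (n + k)
  have hminus := qPochhammerSelfInv_sub_one hq (n + 1 - k)
  have hminus' := qPochhammerSelfInv_sub_one hq (n - k)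
  rw [show (n : ℤ) + 1 + k - 1 = n + k by ring] at hplus
  rw [show (n : ℤ) + 1 - k - 1 = n - k by ring] at hminus
  simp only [centralQBinom]
  rw [show 2 * (n + 1) = 2 * n + 1 + 1 by ring, qPochhammer_succ, qPochhammer_succ,
    show (n : ℤ) + (k - 1) = n + k - 1 by ring, show (n : ℤ) - (k - 1) = n + 1 - k by ring,
    show (n : ℤ) + (k + 1) = n + 1 + k by ring, show (n : ℤ) - (k + 1) = n - k - 1 by ring,
    hplus', hminus', hplus, hminus]
  push_cast
  have hqk : q ^ k ≠ 0 := zpow_ne_zero k hq0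
  simp only [zpow_add₀ hq0, zpow_sub₀ hq0, zpow_natCast, zpow_one]
  field_simp
  ring

end QPochhammer

section ThetaSeries

theorem two_mul_triangle (k : ℤ) : 2 * (k * (k - 1) / 2) = k * (k - 1) :=
  Int.two_mul_ediv_two_of_even (Int.even_mul_pred_self k)

/-- The term `(-1)^k p^(k(k-1)/2) x^k` of the theta series. -/
def thetaTerm {K : Type*} [Field K] (p x : K) (k : ℤ) : K := p ^ (k * (k - 1) / 2) * (-x) ^ k

/-- The Laurent series of the theta function of nome `p`, up to the factor `(p; p)_∞`. -/
noncomputable def thetaSeries {K : Type*} [Field K] [TopologicalSpace K] (p x : K) : K :=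
  ∑' k : ℤ, thetaTerm p x k

section Field

variable {K : Type*} [Field K] {p x a z : K}

theorem thetaTerm_zero (p x : K) : thetaTerm p x 0 = 1 := by simp [thetaTerm]

theorem thetaTerm_add_one (hp : p ≠ 0) (hx : x ≠ 0) (k : ℤ) :
    thetaTerm p x (k + 1) = -(p ^ k * x) * thetaTerm p x k := by
  have h : (k + 1) * (k + 1 - 1) / 2 = k * (k - 1) / 2 + k := by
    linarith [two_mul_triangle k, two_mul_triangle (k + 1)]
  rw [thetaTerm, thetaTerm, h, zpow_add₀ hp, zpow_add_one₀ (neg_ne_zero.2 hx)]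
  ring

theorem thetaTerm_sub_one (hp : p ≠ 0) (hx : x ≠ 0) (k : ℤ) :
    thetaTerm p x (k - 1) = -(p * (p ^ k)⁻¹ * x⁻¹) * thetaTerm p x k := by
  have h := thetaTerm_add_one hp hx (k - 1)
  have hpk : p ^ k ≠ 0 := zpow_ne_zero k hp
  rw [sub_add_cancel, zpow_sub_one₀ hp] at h
  rw [h]
  field_simp

theorem thetaTerm_neg (hp : p ≠ 0) (x : K) (k : ℤ) :
    thetaTerm p x (-k) = thetaTerm p (p * x⁻¹) k := by
  have h : -k * (-k - 1) / 2 = k * (k - 1) / 2 + k := by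
    linarith [two_mul_triangle k, two_mul_triangle (-k)]
  rw [thetaTerm, thetaTerm, h, zpow_add₀ hp, zpow_neg, ← inv_zpow, inv_neg, ← mul_neg, mul_zpow,
    mul_assoc]

theorem thetaTerm_sq_left (p x : K) (k : ℤ) :
    thetaTerm (p ^ 2) x k = p ^ (k * (k - 1)) * (-x) ^ k := by
  rw [thetaTerm, ← zpow_natCast p 2, ← zpow_mul, Nat.cast_two, two_mul_triangle]

theorem mul_zpow_mul_div_zpow (ha : a ≠ 0) (hz : z ≠ 0) (r s : ℤ) :
    (-(a * z)) ^ r * (-(a / z)) ^ s = (-1) ^ (r + s) * (a ^ (r + s) * z ^ (r - s)) := by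
  rw [neg_eq_neg_one_mul, neg_eq_neg_one_mul (a / z), mul_zpow, mul_zpow, mul_zpow, div_zpow,
    zpow_add₀ (by simp), zpow_add₀ ha, zpow_sub₀ hz]
  ring

theorem thetaTerm_mul_thetaTerm (hp : p ≠ 0) (ha : a ≠ 0) (hz : z ≠ 0) (r s : ℤ) :
    thetaTerm p (a * z) r * thetaTerm p (a / z) s =
      p ^ (r * (r - 1) / 2 + s * (s - 1) / 2) *
        ((-1) ^ (r + s) * (a ^ (r + s) * z ^ (r - s))) := by
  rw [thetaTerm, thetaTerm, mul_mul_mul_comm, ← zpow_add₀ hp, mul_zpow_mul_div_zpow ha hz]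

theorem thetaTerm_sq_neg_sq (p a : K) (k : ℤ) :
    thetaTerm (p ^ 2) (-a ^ 2) k = p ^ (k * (k - 1)) * a ^ (2 * k) := by
  rw [thetaTerm_sq_left, neg_neg, zpow_mul a, zpow_ofNat]

theorem thetaTerm_sq_neg_mul_sq (hp : p ≠ 0) (a : K) (k : ℤ) :
    thetaTerm (p ^ 2) (-(p * a ^ 2)) k = p ^ (k * k) * a ^ (2 * k) := by
  rw [thetaTerm_sq_left, neg_neg, mul_zpow, ← mul_assoc, ← zpow_add₀ hp, zpow_mul a, zpow_ofNat,
    show k * (k - 1) + k = k * k by ring]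

theorem thetaTerm_add_mul_thetaTerm_sub (hp : p ≠ 0) (ha : a ≠ 0) (hz : z ≠ 0) (m l : ℤ) :
    thetaTerm p (a * z) (m + l) * thetaTerm p (a / z) (m - l) =
      thetaTerm (p ^ 2) (-a ^ 2) m * thetaTerm (p ^ 2) (-(p * z ^ 2)) l := by
  have hexp : (m + l) * (m + l - 1) / 2 + (m - l) * (m - l - 1) / 2 = m * (m - 1) + l * l := by
    linarith [two_mul_triangle (m + l), two_mul_triangle (m - l)]
  rw [thetaTerm_mul_thetaTerm hp ha hz, thetaTerm_sq_neg_sq, thetaTerm_sq_neg_mul_sq hp, hexp,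
    show m + l + (m - l) = 2 * m by ring, show m + l - (m - l) = 2 * l by ring,
    (even_two_mul m).neg_one_zpow, zpow_add₀ hp]
  ring

theorem thetaTerm_add_mul_thetaTerm_sub_add_one (hp : p ≠ 0) (ha : a ≠ 0) (hz : z ≠ 0)
    (m l : ℤ) :
    thetaTerm p (a * z) (m + l) * thetaTerm p (a / z) (m - l + 1) =
      -(a / z) * (thetaTerm (p ^ 2) (-(p * a ^ 2)) m * thetaTerm (p ^ 2) (-z ^ 2) l) := by
  have hexp : (m + l) * (m + l - 1) / 2 + (m - l + 1) * (m - l + 1 - 1) / 2 =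
      m * m + l * (l - 1) := by
    linarith [two_mul_triangle (m + l), two_mul_triangle (m - l + 1)]
  rw [thetaTerm_mul_thetaTerm hp ha hz, thetaTerm_sq_neg_sq, thetaTerm_sq_neg_mul_sq hp, hexp,
    show m + l + (m - l + 1) = 2 * m + 1 by ring, show m + l - (m - l + 1) = 2 * l - 1 by ring,
    (odd_two_mul_add_one m).neg_one_zpow, zpow_add₀ hp, zpow_add_one₀ ha, zpow_sub_one₀ hz]
  ring

theorem hasSum_finite_triple_product [TopologicalSpace K] [IsTopologicalRing K] (hp0 : p ≠ 0)
    (hp : ¬IsOfFinOrder p) (hx : x ≠ 0) (n : ℕ) :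
    HasSum (fun k : ℤ => centralQBinom p n k * thetaTerm p x k)
      (qPochhammer x p n * qPochhammer (p * x⁻¹) p n) := by
  induction n with
  | zero =>
    convert hasSum_single (0 : ℤ) fun k hk => ?_ using 1
    · simp [qPochhammer, centralQBinom_zero_zero, thetaTerm_zero]
    · rw [centralQBinom_zero_of_ne p hk, zero_mul]
  | succ n ih =>
    have hshift := (Equiv.subRight (1 : ℤ)).hasSum_iff.2 ih
    have hshift' := (Equiv.addRight (1 : ℤ)).hasSum_iff.2 ih
    have hprod : qPochhammer x p (n + 1) * qPochhammer (p * x⁻¹) p (n + 1) =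
        (1 + p ^ (2 * n + 1)) * (qPochhammer x p n * qPochhammer (p * x⁻¹) p n) -
          x * p ^ n * (qPochhammer x p n * qPochhammer (p * x⁻¹) p n) -
          p ^ (n + 1) * x⁻¹ * (qPochhammer x p n * qPochhammer (p * x⁻¹) p n) := by
      rw [qPochhammer_succ, qPochhammer_succ]
      field_simp
      ring
    rw [hprod]
    refine (((ih.mul_left (1 + p ^ (2 * n + 1))).sub (hshift.mul_left (x * p ^ n))).sub
      (hshift'.mul_left (p ^ (n + 1) * x⁻¹))).congr_fun fun k => ?_
    have hpk : p ^ k ≠ 0 := zpow_ne_zero k hp0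
    simp only [Function.comp_apply, Equiv.subRight_apply, Equiv.coe_addRight,
      centralQBinom_succ hp0 hp, thetaTerm_add_one hp0 hx, thetaTerm_sub_one hp0 hx,
      zpow_add₀ hp0, zpow_sub₀ hp0, zpow_natCast, zpow_one]
    field_simp
    ring

end Field

theorem tsum_int_prod_eq_tsum_even_add_tsum_odd {E : Type*} [AddCommGroup E] [UniformSpace E]
    [IsUniformAddGroup E] [CompleteSpace E] [T2Space E] {f : ℤ × ℤ → E} (hf : Summable f) :
    ∑' m, f m = ∑' m : ℤ × ℤ, f (m.1 + m.2, m.1 - m.2) +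
      ∑' m : ℤ × ℤ, f (m.1 + m.2, m.1 - m.2 + 1) := by
  let e : (ℤ × ℤ) ⊕ (ℤ × ℤ) → ℤ × ℤ :=
    Sum.elim (fun m => (m.1 + m.2, m.1 - m.2)) (fun m => (m.1 + m.2, m.1 - m.2 + 1))
  have he : Function.Bijective e := by
    constructor
    · rintro (⟨m, l⟩ | ⟨m, l⟩) (⟨m', l'⟩ | ⟨m', l'⟩) h <;>
        simp only [e, Sum.elim_inl, Sum.elim_inr, Prod.mk.injEq, Sum.inl.injEq, Sum.inr.injEq,
          reduceCtorEq] at h ⊢ <;> lia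
    · rintro ⟨r, s⟩
      rcases Int.even_or_odd' (r - s) with ⟨l, hl | hl⟩
      · exact ⟨Sum.inl (s + l, l), Prod.ext (by dsimp only [e, Sum.elim_inl]; lia) (by simp [e])⟩
      · exact ⟨Sum.inr (s + l, l + 1),
          Prod.ext (by dsimp only [e, Sum.elim_inr]; lia) (by dsimp only [e, Sum.elim_inr]; lia)⟩
  have hfe : Summable (f ∘ e) := (Equiv.ofBijective e he).summable_iff.2 hf
  rw [← (Equiv.ofBijective e he).tsum_eq f]
  exact Summable.tsum_sum (hfe.comp_injective Sum.inl_injective)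
    (hfe.comp_injective Sum.inr_injective)

section NormedField

variable {K : Type*} [NormedField K] {p x a z : K}

theorem summable_norm_thetaTerm_natCast (hp0 : p ≠ 0) (hp : ‖p‖ < 1) (hx : x ≠ 0) :
    Summable fun n : ℕ => ‖thetaTerm p x n‖ := by
  have hlim : Tendsto (fun n : ℕ => ‖p‖ ^ n * ‖x‖) atTop (𝓝 0) := by
    simpa using (tendsto_pow_atTop_nhds_zero_of_lt_one (norm_nonneg p) hp).mul_const ‖x‖
  refine summable_of_ratio_norm_eventually_le one_half_lt_one ?_
  filter_upwards [hlim.eventually_le_const one_half_pos] with n hn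
  rw [Nat.cast_succ, thetaTerm_add_one hp0 hx, norm_norm, norm_norm, norm_mul, norm_neg,
    norm_mul, zpow_natCast, norm_pow]
  gcongr

theorem summable_norm_thetaTerm (hp0 : p ≠ 0) (hp : ‖p‖ < 1) (hx : x ≠ 0) :
    Summable fun k : ℤ => ‖thetaTerm p x k‖ := by
  refine .of_nat_of_neg (summable_norm_thetaTerm_natCast hp0 hp hx) ?_
  simp only [thetaTerm_neg hp0]
  exact summable_norm_thetaTerm_natCast hp0 hp (mul_ne_zero hp0 (inv_ne_zero hx))

theorem thetaSeries_mul_thetaSeries [CompleteSpace K] (hp0 : p ≠ 0) (hp : ‖p‖ < 1) (ha : a ≠ 0)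
    (hz : z ≠ 0) :
    thetaSeries p (a * z) * thetaSeries p (a / z) =
      thetaSeries (p ^ 2) (-a ^ 2) * thetaSeries (p ^ 2) (-(p * z ^ 2)) -
        a / z * (thetaSeries (p ^ 2) (-(p * a ^ 2)) * thetaSeries (p ^ 2) (-z ^ 2)) := by
  have hsq {x : K} (hx : x ≠ 0) : Summable fun k : ℤ => ‖thetaTerm (p ^ 2) x k‖ :=
    summable_norm_thetaTerm (pow_ne_zero 2 hp0)
      (by simpa using pow_lt_one₀ (norm_nonneg p) hp two_ne_zero) hx
  have haz := summable_norm_thetaTerm hp0 hp (mul_ne_zero ha hz)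
  have haz' := summable_norm_thetaTerm hp0 hp (div_ne_zero ha hz)
  have hprod : Summable fun m : ℤ × ℤ => thetaTerm p (a * z) m.1 * thetaTerm p (a / z) m.2 :=
    summable_mul_of_summable_norm haz haz'
  calc thetaSeries p (a * z) * thetaSeries p (a / z)
      = ∑' m : ℤ × ℤ, thetaTerm p (a * z) m.1 * thetaTerm p (a / z) m.2 :=
        tsum_mul_tsum_of_summable_norm haz haz'
    _ = ∑' m : ℤ × ℤ, thetaTerm (p ^ 2) (-a ^ 2) m.1 * thetaTerm (p ^ 2) (-(p * z ^ 2)) m.2 +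
          ∑' m : ℤ × ℤ, -(a / z) *
            (thetaTerm (p ^ 2) (-(p * a ^ 2)) m.1 * thetaTerm (p ^ 2) (-z ^ 2) m.2) := by
        rw [tsum_int_prod_eq_tsum_even_add_tsum_odd hprod]
        simp only [thetaTerm_add_mul_thetaTerm_sub hp0 ha hz,
          thetaTerm_add_mul_thetaTerm_sub_add_one hp0 ha hz]
    _ = _ := by
        rw [tsum_mul_left,
          ← tsum_mul_tsum_of_summable_norm (hsq (by simp [ha])) (hsq (by simp [hp0, hz])),
          ← tsum_mul_tsum_of_summable_norm (hsq (by simp [hp0, ha])) (hsq (by simp [hz])),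
          neg_mul, ← sub_eq_add_neg]
        rfl

end NormedField

end ThetaSeries

section TripleProduct

variable {p q x : ℂ}

theorem not_isOfFinOrder_of_norm_lt_one (hp : ‖p‖ < 1) : ¬IsOfFinOrder p := fun h =>
  hp.ne h.norm_eq_one

theorem summable_norm_mul_pow (z : ℂ) (hq : ‖q‖ < 1) : Summable fun j : ℕ => ‖z * q ^ j‖ := by
  simpa using (summable_geometric_of_lt_one (norm_nonneg q) hq).mul_left ‖z‖

theorem multipliable_one_sub_mul_pow (z : ℂ) (hq : ‖q‖ < 1) :
    Multipliable fun j : ℕ => 1 - z * q ^ j := by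
  simpa only [sub_eq_add_neg] using
    multipliable_one_add_of_summable (by simpa using summable_norm_mul_pow z hq)

theorem tendsto_qPochhammer (z : ℂ) (hq : ‖q‖ < 1) :
    Tendsto (qPochhammer z q) atTop (𝓝 (qPochhammerInf z q)) :=
  (multipliable_one_sub_mul_pow z hq).tendsto_prod_tprod_nat

theorem theta_eq_qPochhammerInf_mul (hp : ‖p‖ < 1) (x : ℂ) :
    theta x p = qPochhammerInf x p * qPochhammerInf (p * x⁻¹) p := by
  simp only [theta, qPochhammerInf, pow_succ', mul_right_comm p _ x⁻¹]
  exact (multipliable_one_sub_mul_pow x hp).tprod_mul (multipliable_one_sub_mul_pow _ hp)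

theorem qPochhammerInf_self_ne_zero (hq : ‖q‖ < 1) : qPochhammerInf q q ≠ 0 := by
  simpa only [qPochhammerInf, sub_eq_add_neg] using
    tprod_one_add_ne_zero_of_summable (f := fun j : ℕ => -(q * q ^ j))
      (fun j => by
        simpa only [sub_eq_add_neg] using
          one_sub_mul_pow_ne_zero (not_isOfFinOrder_of_norm_lt_one hq) j)
      (by simpa using summable_norm_mul_pow q hq)

theorem tendsto_qPochhammerSelfInv (hq : ‖q‖ < 1) :
    Tendsto (qPochhammerSelfInv q) atTop (𝓝 (qPochhammerInf q q)⁻¹) := by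
  rw [← Nat.map_cast_int_atTop, tendsto_map'_iff]
  exact (tendsto_qPochhammer q hq).inv₀ (qPochhammerInf_self_ne_zero hq)

theorem tendsto_centralQBinom (hq : ‖q‖ < 1) (k : ℤ) :
    Tendsto (fun n => centralQBinom q n k) atTop (𝓝 (qPochhammerInf q q)⁻¹) := by
  have hcast : Tendsto (fun n : ℕ => (n : ℤ)) atTop atTop := tendsto_natCast_atTop_atTop
  have hplus := (tendsto_qPochhammerSelfInv hq).comp (tendsto_atTop_add_const_right _ k hcast)
  have hminus := (tendsto_qPochhammerSelfInv hq).comp (tendsto_atTop_add_const_right _ (-k) hcast)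
  have hnum := (tendsto_qPochhammer q hq).comp (tendsto_id.const_mul_atTop' two_pos)
  have h := hnum.mul (hplus.mul hminus)
  rw [mul_inv_cancel_left₀ (qPochhammerInf_self_ne_zero hq)] at h
  exact h

theorem exists_norm_centralQBinom_le (hq : ‖q‖ < 1) :
    ∃ C, ∀ n k, ‖centralQBinom q n k‖ ≤ C := by
  obtain ⟨A, hA⟩ := (Metric.isBounded_range_of_tendsto _ (tendsto_qPochhammer q hq)).exists_norm_le
  obtain ⟨B, hB⟩ := (Metric.isBounded_range_of_tendsto _
    ((tendsto_qPochhammerSelfInv hq).comp tendsto_natCast_atTop_atTop)).exists_norm_le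
  have hA0 : 0 ≤ A := (norm_nonneg _).trans (hA _ ⟨0, rfl⟩)
  have hB0 : 0 ≤ B := (norm_nonneg _).trans (hB _ ⟨0, rfl⟩)
  have hB' : ∀ k, ‖qPochhammerSelfInv q k‖ ≤ B
    | .ofNat k => hB _ ⟨k, rfl⟩
    | .negSucc _ => by simpa [qPochhammerSelfInv] using hB0
  refine ⟨A * (B * B), fun n k => ?_⟩
  rw [centralQBinom, norm_mul, norm_mul]
  gcongr
  exacts [hA _ ⟨2 * n, rfl⟩, hB' _, hB' _]

theorem jacobi_triple_product (hp0 : p ≠ 0) (hp : ‖p‖ < 1) (hx : x ≠ 0) :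
    theta x p = (qPochhammerInf p p)⁻¹ * thetaSeries p x := by
  obtain ⟨C, hC⟩ := exists_norm_centralQBinom_le hp
  have hprod := (tendsto_qPochhammer x hp).mul (tendsto_qPochhammer (p * x⁻¹) hp)
  simp only [← (hasSum_finite_triple_product hp0 (not_isOfFinOrder_of_norm_lt_one hp) hx
    _).tsum_eq] at hprod
  rw [theta_eq_qPochhammerInf_mul hp, thetaSeries, ← tsum_mul_left]
  refine tendsto_nhds_unique hprod <| tendsto_tsum_of_dominated_convergence
    ((summable_norm_thetaTerm hp0 hp hx).mul_left C)
    (fun k => (tendsto_centralQBinom hp k).mul_const _) (.of_forall fun n k => ?_)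
  rw [norm_mul]
  gcongr
  exact hC n k

theorem theta_zero_right (x : ℂ) : theta x 0 = 1 - x := by
  rw [theta, tprod_eq_mulSingle 0 fun j hj => by simp [hj]]
  simp

theorem exists_inv_mul_theta_mul_theta_eq_bracket (hp : ‖p‖ < 1) :
    ∃ F : ℂ → ℂ × ℂ, ∀ a z : ℂ, a ≠ 0 → z ≠ 0 →
      a⁻¹ * (theta (a * z) p * theta (a / z) p) = bracket (F a) (F z) := by
  rcases eq_or_ne p 0 with rfl | hp0
  · refine ⟨fun a => (a + a⁻¹, 1), fun a z ha hz => ?_⟩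
    simp only [bracket, theta_zero_right]
    field_simp
    ring
  · refine ⟨fun a => ((qPochhammerInf p p)⁻¹ ^ 2 * (a⁻¹ * thetaSeries (p ^ 2) (-a ^ 2)),
      thetaSeries (p ^ 2) (-(p * a ^ 2))), fun a z ha hz => ?_⟩
    rw [bracket, jacobi_triple_product hp0 hp (mul_ne_zero ha hz),
      jacobi_triple_product hp0 hp (div_ne_zero ha hz), mul_mul_mul_comm,
      thetaSeries_mul_thetaSeries hp0 hp ha hz]
    field_simp

end TripleProduct

theorem elliptic_cauchy_determinant (p : ℂ) (hp : ‖p‖ < 1) (n : ℕ)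
    (a z : Fin n → ℂ) (ha : ∀ i, a i ≠ 0) (hz : ∀ j, z j ≠ 0)
    (haz : ∀ i j, theta (a i * z j) p ≠ 0 ∧ theta (a i / z j) p ≠ 0)
    (haa : ∀ i j, i ≠ j → theta (a i * a j) p ≠ 0 ∧ theta (a i / a j) p ≠ 0)
    (hzz : ∀ i j, i ≠ j → theta (z i * z j) p ≠ 0 ∧ theta (z i / z j) p ≠ 0) :
    Matrix.det (Matrix.of fun i j : Fin n =>
        ((a i)⁻¹ * (theta (a i * z j) p * theta (a i / z j) p))⁻¹) =
      (-1 : ℂ) ^ (n * (n - 1) / 2) *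
        ((∏ i, ∏ j ∈ Finset.univ.filter (fun j => i < j),
            (a i)⁻¹ * (theta (a i * a j) p * theta (a i / a j) p)) *
         (∏ i, ∏ j ∈ Finset.univ.filter (fun j => i < j),
            (z i)⁻¹ * (theta (z i * z j) p * theta (z i / z j) p))) /
        ∏ i, ∏ j, (a i)⁻¹ * (theta (a i * z j) p * theta (a i / z j) p) := by
  obtain ⟨F, hF⟩ := exists_inv_mul_theta_mul_theta_eq_bracket hp
  have hne (i j : Fin n) : bracket (F (a i)) (F (z j)) ≠ 0 := by
    rw [← hF _ _ (ha i) (hz j)]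
    exact mul_ne_zero (inv_ne_zero (ha i)) (mul_ne_zero (haz i j).1 (haz i j).2)
  simpa only [hF _ _ (ha _) (hz _), hF _ _ (ha _) (ha _), hF _ _ (hz _) (hz _),
    Finset.filter_lt_eq_Ioi] using det_inv_bracket (fun i => F (a i)) (fun j => F (z j)) hne
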